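/- For every integer r ≥ 2 there exists a constant c > 0 such that every r-graph H on n ≥ 2 vertices with independent neighborhoods satisfies α(H) ≥ c·(n·log n)^{1/r}. -/

import Mathlib

open Finset
open scoped Classical

/-- `Z` is an independent set of the hypergraph `H`: it contains no edge. -/
def IsIndep {V : Type*} [DecidableEq V] (H : Finset (Finset V)) (Z : Finset V) : Prop :=
  ∀ e ∈ H, ¬ e ⊆ Z

/-- The independence number of a hypergraph on a finite vertex type. -/
noncomputable def indepNum {V : Type*} [Fintype V] [DecidableEq V]
    (H : Finset (Finset V)) : ℕ :=
  ((Finset.univ : Finset V).powerset.filter (fun Z => IsIndep H Z)).sup Finset.card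

/-- `H` has maximum `r`-degree at most `d`: every `r`-element vertex set is
contained in at most `d` edges. -/
def maxDegLe {V : Type*} [DecidableEq V] (r : ℕ) (H : Finset (Finset V)) (d : ℕ) : Prop :=
  ∀ S : Finset V, S.card = r → (H.filter (fun e => S ⊆ e)).card ≤ d

/-- `H` (an `r`-graph) has independent neighborhoods: for every `(r−1)`-element set `S`
of vertices, the set `{v : S ∪ {v} ∈ H}` is independent. -/
def HasIndepNbhds {V : Type*} [Fintype V] [DecidableEq V] (r : ℕ)
    (H : Finset (Finset V)) : Prop :=
  ∀ S : Finset V, S.card = r - 1 →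
    IsIndep H ((Finset.univ : Finset V).filter (fun v => insert v S ∈ H))

/-!
Write `α` for the independence number of a `k`-graph with independent neighborhoods on `n` vertices
and suppose that `α ^ k` is much smaller than `n log n`. Independent neighborhoods force every set
of `k - 1` vertices to lie in at most `α` edges. Put `x = n ^ (1 / (6 k²))`, choose `ℓ` with
`4 ^ ℓ ≤ x < 4 ^ (ℓ + 1)`, and let `U` contain each vertex independently with probability
`p = x ^ (6 k + 2) / n`. The degree bound makes overlapping pairs of edges and triangles of edges
so rare in `U` that all but at most half of the expected `p n` vertices are uncrowded; for `k = 2`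
no vertex is crowded, since neighborhoods are independent. An exponential moment bound and a union
bound over all `W` of size `α` show that moreover `∑ v ∈ U, min ℓ (deg_W v)` is at most a small
multiple of `ℓ p n` for all these `W`, where `deg_W v` counts the edges consisting of `v` and
vertices of `W`.

Now let `W` be a uniformly random independent subset of `U` and `v` an uncrowded vertex. Condition
on the part of `W` outside `v` and its neighborhood. As `v` is uncrowded, the remaining part
consists of an arbitrary subset `B` of the free neighbors and possibly `v`, the latter only if `B`
contains no edge of the link of `v`. If the free neighbors contain fewer than `ℓ` link edges, then
`v ∈ W` has probability of order at least `2 ^ (-ℓ)`; otherwise, `min ℓ (deg_W v)` has expectation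
of order at least `ℓ`. Either way `4 ^ ℓ ℙ(v ∈ W) + 𝔼 min ℓ (deg_W v)` is of order at least `ℓ`,
and summing over `v` gives `ℓ p n ≲ 4 ^ ℓ α + small multiple of ℓ p n`. This is a contradiction
because `x α` is much smaller than `p n`.
-/

section BinomialSubset

variable {V : Type*} [Fintype V] [DecidableEq V] {p : ℝ}

/-- The expectation `𝔼 f(U)`, where the random set `U` contains each vertex independently with
probability `p`, as a linear functional of `f`. -/
noncomputable def binomialExp (p : ℝ) : (Finset V → ℝ) →ₗ[ℝ] ℝ :=
  ∑ U : Finset V, (p ^ #U * (1 - p) ^ #Uᶜ) • LinearMap.proj U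

lemma binomialExp_apply (p : ℝ) (f : Finset V → ℝ) :
    binomialExp p f = ∑ U : Finset V, p ^ #U * (1 - p) ^ #Uᶜ * f U := by
  simp [binomialExp]

lemma binomialExp_mono (h0 : 0 ≤ p) (h1 : p ≤ 1) {f g : Finset V → ℝ} (hfg : ∀ U, f U ≤ g U) :
    binomialExp p f ≤ binomialExp p g := by
  have := sub_nonneg.2 h1
  simp only [binomialExp_apply]
  gcongr with U
  exact hfg U

lemma binomialExp_prod_mul_prod_compl (p : ℝ) (g h : V → ℝ) :
    binomialExp p (fun U ↦ (∏ v ∈ U, g v) * ∏ v ∈ Uᶜ, h v) =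
      ∏ v, (p * g v + (1 - p) * h v) := by
  rw [Fintype.prod_add, binomialExp_apply]
  refine sum_congr rfl fun U _ ↦ ?_
  simp only [prod_mul_distrib, prod_const]
  ring

lemma binomialExp_const (p c : ℝ) : binomialExp p (fun _ : Finset V ↦ c) = c := by
  have hone : binomialExp p (fun _ : Finset V ↦ 1) = 1 := by
    simpa using binomialExp_prod_mul_prod_compl (V := V) p 1 1
  simpa [hone, Pi.smul_def] using map_smul (binomialExp p) c (fun _ : Finset V ↦ 1)

lemma exists_binomialExp_le (h0 : 0 ≤ p) (h1 : p ≤ 1) (f : Finset V → ℝ) :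
    ∃ U, binomialExp p f ≤ f U := by
  obtain ⟨U, hU⟩ := Finite.exists_max f
  exact ⟨U, (binomialExp_mono h0 h1 hU).trans_eq (binomialExp_const p (f U))⟩

lemma binomialExp_ite_subset (p : ℝ) (A : Finset V) :
    binomialExp p (fun U ↦ if A ⊆ U then 1 else 0) = p ^ #A := by
  have hind (U : Finset V) : (if A ⊆ U then 1 else 0 : ℝ) =
      (∏ v ∈ U, 1) * ∏ v ∈ Uᶜ, if v ∉ A then 1 else 0 := by
    simp only [prod_const_one, one_mul, prod_boole, mem_compl]
    exact if_congr ⟨fun h v hvU hvA ↦ hvU (h hvA), fun h v ↦ not_imp_not.1 (h v)⟩ rfl rfl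
  have hfactor (v : V) : (p * 1 + (1 - p) * if v ∉ A then 1 else 0) = if v ∈ A then p else 1 := by
    split_ifs <;> simp_all
  simp_rw [hind, binomialExp_prod_mul_prod_compl, hfactor, prod_ite_mem, univ_inter, prod_const]

lemma binomialExp_card_filter_subset {ι : Type*} (p : ℝ) (s : Finset ι) (A : ι → Finset V) :
    binomialExp p (fun U ↦ (#{i ∈ s | A i ⊆ U} : ℝ)) = ∑ i ∈ s, p ^ #(A i) := by
  have hind : (fun U ↦ (#{i ∈ s | A i ⊆ U} : ℝ)) = ∑ i ∈ s, fun U ↦ if A i ⊆ U then 1 else 0 := by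
    ext U
    simp only [Finset.sum_apply, sum_boole]
  simp only [hind, map_sum, binomialExp_ite_subset]

lemma binomialExp_card (p : ℝ) :
    binomialExp p (fun U : Finset V ↦ (#U : ℝ)) = p * Fintype.card V := by
  simpa [mul_comm] using binomialExp_card_filter_subset p univ (fun v : V ↦ {v})

lemma exp_le_one_add_two_mul {y : ℝ} (h0 : 0 ≤ y) (h1 : y ≤ 1) : Real.exp y ≤ 1 + 2 * y := by
  have habs := (abs_le.1 (Real.abs_exp_sub_one_sub_id_le (abs_le.2 ⟨by linarith, h1⟩))).2
  nlinarith

lemma binomialExp_exp_sum_le (h0 : 0 ≤ p) (h1 : p ≤ 1) {f : V → ℝ} (hf0 : ∀ v, 0 ≤ f v)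
    (hf1 : ∀ v, f v ≤ 1) :
    binomialExp p (fun U ↦ Real.exp (∑ v ∈ U, f v)) ≤ Real.exp (2 * (p * ∑ v, f v)) := by
  have hmgf := binomialExp_prod_mul_prod_compl p (fun v ↦ Real.exp (f v)) 1
  simp only [Pi.one_apply, prod_const_one, mul_one] at hmgf
  simp only [Real.exp_sum, hmgf, mul_sum]
  refine prod_le_prod (fun v _ ↦ by have := sub_nonneg.2 h1; positivity) fun v _ ↦ ?_
  have hexp : p * Real.exp (f v) ≤ p * (1 + 2 * f v) := by
    gcongr
    exact exp_le_one_add_two_mul (hf0 v) (hf1 v)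
  linarith [Real.add_one_le_exp (2 * (p * f v))]

lemma binomialExp_ite_lt_sum_le (h0 : 0 ≤ p) (h1 : p ≤ 1) {f : V → ℝ} (hf0 : ∀ v, 0 ≤ f v)
    (hf1 : ∀ v, f v ≤ 1) {K : ℝ} (hK : p * ∑ v, f v ≤ K) :
    binomialExp p (fun U ↦ if 3 * K < ∑ v ∈ U, f v then 1 else 0) ≤ Real.exp (-K) := by
  have hmarkov (U : Finset V) : (if 3 * K < ∑ v ∈ U, f v then 1 else 0) ≤
      Real.exp (-(3 * K)) * Real.exp (∑ v ∈ U, f v) := by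
    rw [← Real.exp_add]
    split_ifs with h
    · exact Real.one_le_exp (by linarith)
    · positivity
  calc binomialExp p (fun U ↦ if 3 * K < ∑ v ∈ U, f v then 1 else 0)
      ≤ binomialExp p (Real.exp (-(3 * K)) • fun U ↦ Real.exp (∑ v ∈ U, f v)) :=
        binomialExp_mono h0 h1 hmarkov
    _ ≤ Real.exp (-(3 * K)) * Real.exp (2 * (p * ∑ v, f v)) := by
        rw [map_smul, smul_eq_mul]
        gcongr
        exact binomialExp_exp_sum_le h0 h1 hf0 hf1
    _ ≤ Real.exp (-K) := by
        rw [← Real.exp_add]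
        gcongr
        linarith

/-- The deletion method, applied to the size of `U`, minus the number of its bad vertices, minus
`|V|` for every event `P i` that occurs. -/
lemma exists_card_filter_not_ge_and_forall_not {ι : Type*} (h0 : 0 < p) (h1 : p ≤ 1) [Nonempty V]
    (bad : Finset V → V → Prop) [∀ U, DecidablePred (bad U)] (s : Finset ι)
    (P : ι → Finset V → Prop) [∀ i, DecidablePred (P i)]
    (hbad : binomialExp p (fun U ↦ (#{v ∈ U | bad U v} : ℝ)) ≤ p * Fintype.card V / 4)
    (hP : (Fintype.card V : ℝ) * ∑ i ∈ s, binomialExp p (fun U ↦ if P i U then 1 else 0) ≤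
      p * Fintype.card V / 4) :
    ∃ U, p * Fintype.card V / 2 ≤ #{v ∈ U | ¬ bad U v} ∧ ∀ i ∈ s, ¬ P i U := by
  set n := (Fintype.card V : ℝ)
  have hn : 0 < n := by simpa [n] using Fintype.card_pos
  obtain ⟨U, hU⟩ := exists_binomialExp_le h0.le h1 ((fun U ↦ (#U : ℝ)) -
    (fun U ↦ (#{v ∈ U | bad U v} : ℝ)) - n • ∑ i ∈ s, fun U ↦ if P i U then 1 else 0)
  rw [map_sub, map_sub, map_smul, map_sum, binomialExp_card, smul_eq_mul] at hU
  simp only [Pi.sub_apply, Pi.smul_apply, Finset.sum_apply, sum_boole, smul_eq_mul] at hU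
  have hsplit : (#{v ∈ U | bad U v} : ℝ) + #{v ∈ U | ¬ bad U v} = #U := by
    exact_mod_cast card_filter_add_card_filter_not (s := U) (bad U)
  have hcount : p * n / 2 ≤ #{v ∈ U | ¬ bad U v} - n * #{i ∈ s | P i U} := by linarith
  have hgood : (#{v ∈ U | ¬ bad U v} : ℝ) ≤ n := Nat.cast_le.2 (card_le_univ _)
  refine ⟨U, hcount.trans (sub_le_self _ (by positivity)), fun i hi hPi ↦ ?_⟩
  have hpos : (1 : ℝ) ≤ #{i ∈ s | P i U} := by
    exact_mod_cast card_pos.2 ⟨i, mem_filter.2 ⟨hi, hPi⟩⟩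
  have := le_mul_of_one_le_right hn.le hpos
  have : 0 < p * n := by positivity
  linarith

end BinomialSubset

section Subfamilies

variable {V : Type*} [DecidableEq V] {A : Finset V} {L : Finset (Finset V)} {ℓ r : ℕ}

lemma two_pow_card_le_of_card_filter_subset_le (hL : #{T ∈ L | T ⊆ A} ≤ ℓ)
    (hne : ∀ T ∈ L, T.Nonempty) :
    2 ^ #A ≤ 2 ^ ℓ * #{B ∈ A.powerset | ∀ T ∈ L, ¬ T ⊆ B} := by
  choose a ha using hne
  set R := {T ∈ L | T ⊆ A}.attach.image fun T ↦ a T.1 (mem_filter.1 T.2).1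
  have hR : #R ≤ ℓ := card_image_le.trans (card_attach.trans_le hL)
  have havoid : (A \ R).powerset ⊆ {B ∈ A.powerset | ∀ T ∈ L, ¬ T ⊆ B} := by
    intro B hB
    rw [mem_powerset, subset_sdiff] at hB
    refine mem_filter.2 ⟨mem_powerset.2 hB.1, fun T hT hTB ↦ ?_⟩
    have haR : a T hT ∈ R :=
      mem_image.2 ⟨⟨T, mem_filter.2 ⟨hT, hTB.trans hB.1⟩⟩, mem_attach _ _, rfl⟩
    exact disjoint_left.1 hB.2 (hTB (ha T hT)) haR
  calc 2 ^ #A ≤ 2 ^ (ℓ + #(A \ R)) := by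
        gcongr
        · norm_num
        · have := le_card_sdiff R A
          lia
    _ = 2 ^ ℓ * #(A \ R).powerset := by rw [pow_add, card_powerset]
    _ ≤ 2 ^ ℓ * #{B ∈ A.powerset | ∀ T ∈ L, ¬ T ⊆ B} := by gcongr

lemma mul_two_pow_card_le_sum_min (hL : ℓ ≤ #{T ∈ L | T ⊆ A}) (hcard : ∀ T ∈ L, #T = r) :
    ℓ * 2 ^ #A ≤ 2 ^ r * ∑ B ∈ A.powerset, min ℓ #{T ∈ L | T ⊆ B} := by
  obtain ⟨L', hL', rfl⟩ := exists_subset_card_eq hL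
  have hsuper (T) (hT : T ∈ L') : 2 ^ #A ≤ 2 ^ r * #{B ∈ A.powerset | T ⊆ B} := by
    obtain ⟨hTL, hTA⟩ := mem_filter.1 (hL' hT)
    have hIcc : {B ∈ A.powerset | T ⊆ B} = Icc T A := by
      ext B
      simp [and_comm]
    rw [hIcc, card_Icc_finset hTA, hcard T hTL, ← pow_add]
    exact Nat.pow_le_pow_right two_pos (by lia)
  calc #L' * 2 ^ #A = ∑ _ ∈ L', 2 ^ #A := by rw [sum_const, smul_eq_mul]
    _ ≤ ∑ T ∈ L', 2 ^ r * #{B ∈ A.powerset | T ⊆ B} := sum_le_sum hsuper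
    _ = 2 ^ r * ∑ B ∈ A.powerset, #{T ∈ L' | T ⊆ B} := by
        rw [← mul_sum]
        congr 1
        exact sum_card_bipartiteAbove_eq_sum_card_bipartiteBelow fun T B : Finset V ↦ T ⊆ B
    _ ≤ 2 ^ r * ∑ B ∈ A.powerset, min #L' #{T ∈ L | T ⊆ B} := by
        have hL'L : L' ⊆ L := hL'.trans (filter_subset _ _)
        refine Nat.mul_le_mul_left _ (sum_le_sum fun B _ ↦ le_min (card_filter_le _ _) ?_)
        exact card_le_card (filter_subset_filter _ hL'L)

lemma mul_two_pow_card_le (hr : 1 ≤ r) (hcard : ∀ T ∈ L, #T = r) (ℓ : ℕ) (A : Finset V) :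
    ℓ * 2 ^ #A ≤ 2 ^ r * (4 ^ ℓ * #{B ∈ A.powerset | ∀ T ∈ L, ¬ T ⊆ B} +
      ∑ B ∈ A.powerset, min ℓ #{T ∈ L | T ⊆ B}) := by
  rcases le_total #{T ∈ L | T ⊆ A} ℓ with hfew | hmany
  · have hne (T) (hT : T ∈ L) : T.Nonempty := card_pos.1 (by have := hcard T hT; lia)
    have hℓ : ℓ ≤ 2 ^ ℓ := Nat.lt_two_pow_self.le
    calc ℓ * 2 ^ #A
        ≤ 2 ^ ℓ * (2 ^ ℓ * #{B ∈ A.powerset | ∀ T ∈ L, ¬ T ⊆ B}) :=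
          Nat.mul_le_mul hℓ (two_pow_card_le_of_card_filter_subset_le hfew hne)
      _ = 4 ^ ℓ * #{B ∈ A.powerset | ∀ T ∈ L, ¬ T ⊆ B} := by
          rw [← mul_assoc, ← mul_pow]
          rfl
      _ ≤ _ := (Nat.le_add_right _ _).trans (Nat.le_mul_of_pos_left _ (by positivity))
  · exact (mul_two_pow_card_le_sum_min hmany hcard).trans (by gcongr; exact Nat.le_add_left _ _)

end Subfamilies

lemma IsIndep.mono {V : Type*} [DecidableEq V] {H : Finset (Finset V)} {Y Z : Finset V}
    (hZ : IsIndep H Z) (hYZ : Y ⊆ Z) : IsIndep H Y :=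
  fun e he heY ↦ hZ e he (heY.trans hYZ)

section Local

variable {V : Type*} [DecidableEq V] {H : Finset (Finset V)} {U W W₀ B : Finset V} {v : V}
  {ℓ r : ℕ}

/-- The independent sets of `H` contained in `U`. -/
noncomputable def indepSets (H : Finset (Finset V)) (U : Finset V) : Finset (Finset V) :=
  {Z ∈ U.powerset | IsIndep H Z}

/-- The number of edges of `H` that contain `v` and whose other vertices all lie in `W`. The link
`{e \ {v} : v ∈ e ∈ H}` of `v` is Mathlib's `H.memberSubfamily v`. -/
def linkDegree (H : Finset (Finset V)) (W : Finset V) (v : V) : ℕ :=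
  #{T ∈ H.memberSubfamily v | T ⊆ W}

/-- The neighborhood of `v` in the subhypergraph of `H` induced by `U`, for `v ∈ U`: the vertices
other than `v` lying on a common edge with `v`. -/
def nbhdIn (H : Finset (Finset V)) (U : Finset V) (v : V) : Finset V :=
  {T ∈ H.memberSubfamily v | T ⊆ U}.biUnion id

/-- Local sparseness of the subhypergraph of `H` induced by `U` at the vertex `v ∈ U`: no edge
avoiding `v` meets the neighborhood of `v` twice. -/
def IsUncrowdedAt (H : Finset (Finset V)) (U : Finset V) (v : V) : Prop :=
  ∀ g ∈ H, g ⊆ U → v ∉ g → #(g ∩ nbhdIn H U v) ≤ 1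

/-- The neighbors of `v` that can individually be added to the independent set `W₀`. -/
noncomputable def freeNbrs (H : Finset (Finset V)) (U : Finset V) (v : V) (W₀ : Finset V) :
    Finset V :=
  {x ∈ nbhdIn H U v | IsIndep H (insert x W₀)}

lemma mem_indepSets : W ∈ indepSets H U ↔ W ⊆ U ∧ IsIndep H W := by
  simp only [indepSets, mem_filter, mem_powerset]

lemma mem_nbhdIn {a : V} :
    a ∈ nbhdIn H U v ↔ ∃ T, (insert v T ∈ H ∧ v ∉ T) ∧ T ⊆ U ∧ a ∈ T := by
  simp only [nbhdIn, mem_biUnion, mem_filter, mem_memberSubfamily, id_eq, and_assoc]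

lemma nbhdIn_subset : nbhdIn H U v ⊆ U := fun _ ha ↦ by
  obtain ⟨T, -, hTU, haT⟩ := mem_nbhdIn.1 ha
  exact hTU haT

lemma notMem_nbhdIn_self : v ∉ nbhdIn H U v := fun hv ↦ by
  obtain ⟨T, hT, -, hvT⟩ := mem_nbhdIn.1 hv
  exact hT.2 hvT

lemma linkDegree_mono {W' : Finset V} (h : W ⊆ W') (v : V) :
    linkDegree H W v ≤ linkDegree H W' v :=
  card_le_card (monotone_filter_right _ fun _ _ hT ↦ hT.trans h)

lemma card_of_mem_memberSubfamily (hH : ∀ e ∈ H, #e = r + 1) {T : Finset V}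
    (hT : T ∈ H.memberSubfamily v) : #T = r := by
  obtain ⟨hTH, hvT⟩ := mem_memberSubfamily.1 hT
  have := hH _ hTH
  rwa [card_insert_of_notMem hvT, Nat.add_right_cancel_iff] at this

lemma isIndep_union_iff (hunc : IsUncrowdedAt H U v) (hW₀ : W₀ ∈ indepSets H U) (hvW₀ : v ∉ W₀)
    (hB : B ⊆ nbhdIn H U v) : IsIndep H (W₀ ∪ B) ↔ B ⊆ freeNbrs H U v W₀ := by
  obtain ⟨hW₀U, hW₀⟩ := mem_indepSets.1 hW₀
  refine ⟨fun h x hx ↦ mem_filter.2 ⟨hB hx, h.mono ?_⟩, fun h g hg hgs ↦ ?_⟩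
  · exact insert_subset (mem_union_right _ hx) subset_union_left
  by_cases hgB : ∃ x ∈ g, x ∈ B
  · obtain ⟨x, hxg, hxB⟩ := hgB
    have hgU : g ⊆ U := hgs.trans (union_subset hW₀U (hB.trans nbhdIn_subset))
    have hvg : v ∉ g := fun hv ↦ (mem_union.1 (hgs hv)).elim hvW₀ fun hvB ↦
      notMem_nbhdIn_self (hB hvB)
    have huniq := card_le_one.1 (hunc g hg hgU hvg)
    refine (mem_filter.1 (h hxB)).2 g hg fun y hy ↦ ?_
    rcases mem_union.1 (hgs hy) with hyW | hyB
    · exact mem_insert_of_mem hyW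
    · rw [huniq y (mem_inter.2 ⟨hy, hB hyB⟩) x (mem_inter.2 ⟨hxg, hB hxB⟩)]
      exact mem_insert_self _ _
  · exact hW₀ g hg fun y hy ↦ (mem_union.1 (hgs hy)).resolve_right fun hyB ↦ hgB ⟨y, hy, hyB⟩

lemma isIndep_insert_union_iff (hW₀ : W₀ ⊆ U \ nbhdIn H U v) (hB : B ⊆ U) :
    IsIndep H (insert v (W₀ ∪ B)) ↔
      IsIndep H (W₀ ∪ B) ∧ ∀ T ∈ H.memberSubfamily v, ¬ T ⊆ B := by
  refine ⟨fun h ↦ ⟨h.mono (subset_insert _ _), fun T hT hTB ↦ ?_⟩, fun ⟨h, hlink⟩ g hg hgs ↦ ?_⟩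
  · exact h _ (mem_memberSubfamily.1 hT).1 (insert_subset_insert v (hTB.trans subset_union_right))
  by_cases hvg : v ∈ g
  · have hT : g.erase v ∈ H.memberSubfamily v :=
      mem_memberSubfamily.2 ⟨by rwa [insert_erase hvg], notMem_erase v g⟩
    have hTs : g.erase v ⊆ W₀ ∪ B := subset_insert_iff.1 hgs
    have hTU : g.erase v ⊆ U := hTs.trans (union_subset (hW₀.trans sdiff_subset) hB)
    refine hlink _ hT fun y hy ↦ (mem_union.1 (hTs hy)).resolve_left fun hyW ↦ ?_
    exact (mem_sdiff.1 (hW₀ hyW)).2 (mem_nbhdIn.2 ⟨_, mem_memberSubfamily.1 hT, hTU, hy⟩)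
  · exact h g hg ((subset_insert_iff_of_notMem hvg).1 hgs)

lemma sum_filter_sdiff_eq (hv : v ∈ U) (hunc : IsUncrowdedAt H U v)
    (hW₀ : W₀ ∈ indepSets H (U \ insert v (nbhdIn H U v))) (f : Finset V → ℕ) :
    ∑ W ∈ indepSets H U with W \ insert v (nbhdIn H U v) = W₀, f W =
      ∑ B ∈ (freeNbrs H U v W₀).powerset with ∀ T ∈ H.memberSubfamily v, ¬ T ⊆ B,
        f (insert v (W₀ ∪ B)) + ∑ B ∈ (freeNbrs H U v W₀).powerset, f (W₀ ∪ B) := by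
  set N := nbhdIn H U v
  have hNU : N ⊆ U := nbhdIn_subset
  have hvN : v ∉ N := notMem_nbhdIn_self
  obtain ⟨hW₀U, hW₀ind⟩ := mem_indepSets.1 hW₀
  have hW₀N : W₀ ⊆ U \ N := hW₀U.trans (sdiff_subset_sdiff le_rfl (subset_insert _ _))
  have hvW₀ : v ∉ W₀ := fun h ↦ (mem_sdiff.1 (hW₀U h)).2 (mem_insert_self _ _)
  have hfree : freeNbrs H U v W₀ ⊆ N := filter_subset _ _
  have hunion {B} (hB : B ⊆ N) : IsIndep H (W₀ ∪ B) ↔ B ⊆ freeNbrs H U v W₀ :=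
    isIndep_union_iff hunc (mem_indepSets.2 ⟨hW₀U.trans sdiff_subset, hW₀ind⟩) hvW₀ hB
  have hinsert {B} (hB : B ⊆ N) : IsIndep H (insert v (W₀ ∪ B)) ↔
      B ⊆ freeNbrs H U v W₀ ∧ ∀ T ∈ H.memberSubfamily v, ¬ T ⊆ B := by
    rw [isIndep_insert_union_iff hW₀N (hB.trans hNU), hunion hB]
  rw [← sum_filter_add_sum_filter_not _ (fun W ↦ v ∈ W)]
  congr 1
  · refine sum_nbij' (fun W ↦ W ∩ N) (fun B ↦ insert v (W₀ ∪ B)) ?_ ?_ ?_ ?_ ?_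
    all_goals simp only [mem_filter, mem_powerset, mem_indepSets]
    · rintro W ⟨⟨⟨_, hW⟩, rfl⟩, hvW⟩
      have hsplit : insert v (W \ insert v N ∪ W ∩ N) = W := by grind
      rwa [← hinsert inter_subset_right, hsplit]
    · intro B hB
      rw [hinsert (hB.1.trans hfree)]
      grind
    · grind
    · grind
    · exact fun W hW ↦ congrArg f (by grind)
  · refine sum_nbij' (fun W ↦ W ∩ N) (fun B ↦ W₀ ∪ B) ?_ ?_ ?_ ?_ ?_
    all_goals simp only [mem_filter, mem_powerset, mem_indepSets]
    · rintro W ⟨⟨⟨_, hW⟩, rfl⟩, hvW⟩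
      have hsplit : W \ insert v N ∪ W ∩ N = W := by grind
      rwa [← hunion inter_subset_right, hsplit]
    · intro B hB
      rw [hunion (hB.trans hfree)]
      grind
    · grind
    · grind
    · exact fun W hW ↦ congrArg f (by grind)

lemma sum_indepSets_eq (hv : v ∈ U) (hunc : IsUncrowdedAt H U v) (f : Finset V → ℕ) :
    ∑ W ∈ indepSets H U, f W = ∑ W₀ ∈ indepSets H (U \ insert v (nbhdIn H U v)),
      (∑ B ∈ (freeNbrs H U v W₀).powerset with ∀ T ∈ H.memberSubfamily v, ¬ T ⊆ B,
        f (insert v (W₀ ∪ B)) + ∑ B ∈ (freeNbrs H U v W₀).powerset, f (W₀ ∪ B)) := by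
  set N := nbhdIn H U v
  have hmaps : ∀ W ∈ indepSets H U, W \ insert v N ∈ indepSets H (U \ insert v N) := by
    intro W hW
    rw [mem_indepSets] at hW ⊢
    exact ⟨sdiff_subset_sdiff hW.1 le_rfl, hW.2.mono sdiff_subset⟩
  rw [← sum_fiberwise_of_maps_to hmaps]
  exact sum_congr rfl fun W₀ hW₀ ↦ sum_filter_sdiff_eq hv hunc hW₀ f

lemma mul_card_indepSets_le (hr : 1 ≤ r) (hH : ∀ e ∈ H, #e = r + 1) (hv : v ∈ U)
    (hunc : IsUncrowdedAt H U v) (ℓ : ℕ) :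
    ℓ * #(indepSets H U) ≤ 2 ^ (r + 1) *
      ∑ W ∈ indepSets H U, ((if v ∈ W then 4 ^ ℓ else 0) + min ℓ (linkDegree H W v)) := by
  have hcard (T) (hT : T ∈ H.memberSubfamily v) : #T = r := card_of_mem_memberSubfamily hH hT
  rw [card_eq_sum_ones, sum_indepSets_eq hv hunc, sum_indepSets_eq hv hunc, mul_sum, mul_sum]
  refine sum_le_sum fun W₀ _ ↦ ?_
  set A := freeNbrs H U v W₀
  set good := {B ∈ A.powerset | ∀ T ∈ H.memberSubfamily v, ¬ T ⊆ B}
  have hsum : ∑ B ∈ good, 1 + ∑ B ∈ A.powerset, 1 ≤ 2 * 2 ^ #A := by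
    rw [sum_const, sum_const, card_powerset, smul_eq_mul, smul_eq_mul, mul_one, mul_one, two_mul]
    gcongr
    exact (card_filter_le _ _).trans (card_powerset A).le
  calc ℓ * (∑ B ∈ good, 1 + ∑ B ∈ A.powerset, 1) ≤ 2 * (ℓ * 2 ^ #A) := by
        rw [mul_left_comm]
        gcongr
    _ ≤ 2 * (2 ^ r * (4 ^ ℓ * #good +
          ∑ B ∈ A.powerset, min ℓ #{T ∈ H.memberSubfamily v | T ⊆ B})) :=
        Nat.mul_le_mul_left 2 (mul_two_pow_card_le hr hcard ℓ A)
    _ = 2 ^ (r + 1) * (∑ B ∈ good, 4 ^ ℓ + ∑ B ∈ A.powerset, min ℓ (linkDegree H B v)) := by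
        rw [sum_const, smul_eq_mul, pow_succ']
        simp only [linkDegree]
        ring
    _ ≤ _ := by
        gcongr with B _ B
        · rw [if_pos (mem_insert_self _ _)]
          exact Nat.le_add_right _ _
        · exact (min_le_min_left _ (linkDegree_mono subset_union_right v)).trans
            (Nat.le_add_left _ _)

lemma mul_card_filter_isUncrowdedAt_le (hr : 1 ≤ r) (hH : ∀ e ∈ H, #e = r + 1) {d D : ℕ}
    (hd : ∀ W ∈ indepSets H U, #W ≤ d)
    (hD : ∀ W ∈ indepSets H U, ∑ v ∈ U, min ℓ (linkDegree H W v) ≤ D) :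
    ℓ * #{v ∈ U | IsUncrowdedAt H U v} ≤ 2 ^ (r + 1) * (4 ^ ℓ * d + D) := by
  have hempty : ∅ ∈ indepSets H U := by
    refine mem_indepSets.2 ⟨empty_subset U, fun e he hsub ↦ ?_⟩
    have := hH e he
    rw [subset_empty.1 hsub, card_empty] at this
    lia
  refine le_of_mul_le_mul_right ?_ (card_pos.2 ⟨∅, hempty⟩)
  have hoccupancy (W) (hW : W ∈ indepSets H U) :
      ∑ v ∈ U with IsUncrowdedAt H U v, ((if v ∈ W then 4 ^ ℓ else 0) + min ℓ (linkDegree H W v)) ≤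
        4 ^ ℓ * d + D := by
    have hWU : U ∩ W = W := inter_eq_right.2 (mem_indepSets.1 hW).1
    calc _ ≤ ∑ v ∈ U, ((if v ∈ W then 4 ^ ℓ else 0) + min ℓ (linkDegree H W v)) :=
          sum_le_sum_of_subset (filter_subset _ _)
      _ = 4 ^ ℓ * #W + ∑ v ∈ U, min ℓ (linkDegree H W v) := by
          rw [sum_add_distrib, sum_ite_mem, hWU, sum_const, smul_eq_mul, mul_comm]
      _ ≤ 4 ^ ℓ * d + D := by
          gcongr
          exacts [hd W hW, hD W hW]
  calc ℓ * #{v ∈ U | IsUncrowdedAt H U v} * #(indepSets H U)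
      = ∑ v ∈ U with IsUncrowdedAt H U v, ℓ * #(indepSets H U) := by
        rw [sum_const, smul_eq_mul]
        ring
    _ ≤ ∑ v ∈ U with IsUncrowdedAt H U v, 2 ^ (r + 1) *
          ∑ W ∈ indepSets H U, ((if v ∈ W then 4 ^ ℓ else 0) + min ℓ (linkDegree H W v)) :=
        sum_le_sum fun v hv ↦
          mul_card_indepSets_le hr hH (mem_filter.1 hv).1 (mem_filter.1 hv).2 ℓ
    _ = 2 ^ (r + 1) * ∑ W ∈ indepSets H U, ∑ v ∈ U with IsUncrowdedAt H U v,
          ((if v ∈ W then 4 ^ ℓ else 0) + min ℓ (linkDegree H W v)) := by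
        rw [← mul_sum, sum_comm]
    _ ≤ 2 ^ (r + 1) * ∑ W ∈ indepSets H U, (4 ^ ℓ * d + D) := by
        gcongr with W hW
        exact hoccupancy W hW
    _ = _ := by
        rw [sum_const, smul_eq_mul]
        ring

end Local

section Codegree

variable {V : Type*} [Fintype V] [DecidableEq V] {H : Finset (Finset V)} {d r : ℕ}

lemma IsIndep.card_le_indepNum {Z : Finset V} (hZ : IsIndep H Z) : #Z ≤ indepNum H :=
  le_sup (f := Finset.card) (mem_filter.2 ⟨mem_powerset.2 (subset_univ Z), hZ⟩)

lemma indepNum_le_card (H : Finset (Finset V)) : indepNum H ≤ Fintype.card V :=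
  Finset.sup_le fun Z _ ↦ card_le_univ Z

lemma one_le_indepNum [Nonempty V] (hH : ∀ e ∈ H, 2 ≤ #e) : 1 ≤ indepNum H := by
  obtain ⟨v⟩ := ‹Nonempty V›
  refine IsIndep.card_le_indepNum (Z := {v}) fun e he hev ↦ ?_
  have := (hH e he).trans ((card_le_card hev).trans_eq (card_singleton v))
  lia

lemma HasIndepNbhds.maxDegLe_indepNum (hH : ∀ e ∈ H, #e = r + 1) (hN : HasIndepNbhds (r + 1) H) :
    maxDegLe r H (indepNum H) := by
  intro S hS
  have hextend : {e ∈ H | S ⊆ e} ⊆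
      ({v | insert v S ∈ H} : Finset V).image fun v ↦ insert v S := by
    intro e he
    obtain ⟨heH, hSe⟩ := mem_filter.1 he
    obtain ⟨v, -, rfl⟩ := exists_eq_insert_iff.2 ⟨hSe, by rw [hS, hH e heH]⟩
    exact mem_image_of_mem _ (mem_filter.2 ⟨mem_univ v, heH⟩)
  exact (card_le_card hextend).trans (card_image_le.trans (hN S hS).card_le_indepNum)

lemma maxDegLe.card_filter_subset_le (hd : maxDegLe r H d) (hH : ∀ e ∈ H, #e = r + 1)
    {J : Finset V} (hJ : #J ≤ r) :
    #{e ∈ H | J ⊆ e} ≤ Fintype.card V ^ (r - #J) * d := by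
  have hextend : {e ∈ H | J ⊆ e} ⊆
      (powersetCard (r - #J) Jᶜ).biUnion fun R ↦ {e ∈ H | J ∪ R ⊆ e} := by
    intro e he
    obtain ⟨heH, hJe⟩ := mem_filter.1 he
    obtain ⟨S, hJS, hSe, hS⟩ :=
      exists_subsuperset_card_eq hJe hJ (r.le_succ.trans_eq (hH e heH).symm)
    refine mem_biUnion.2 ⟨S \ J, mem_powersetCard.2 ⟨?_, by rw [card_sdiff_of_subset hJS, hS]⟩, ?_⟩
    · exact subset_compl_iff_disjoint_right.2 sdiff_disjoint
    · exact mem_filter.2 ⟨heH, by rwa [union_sdiff_of_subset hJS]⟩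
  have hdeg (R) (hR : R ∈ powersetCard (r - #J) Jᶜ) : #{e ∈ H | J ∪ R ⊆ e} ≤ d := by
    obtain ⟨hRJ, hR⟩ := mem_powersetCard.1 hR
    refine hd _ ?_
    rw [card_union_of_disjoint (subset_compl_iff_disjoint_left.1 hRJ), hR]
    lia
  calc #{e ∈ H | J ⊆ e} ≤ #(powersetCard (r - #J) Jᶜ) * d :=
        (card_le_card hextend).trans (card_biUnion_le_card_mul _ _ _ hdeg)
    _ ≤ Fintype.card V ^ (r - #J) * d := by
        rw [card_powersetCard]
        gcongr
        exact (Nat.choose_le_pow _ _).trans (Nat.pow_le_pow_left (card_le_univ _) _)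

lemma maxDegLe.sum_linkDegree_le (hd : maxDegLe r H d) (hH : ∀ e ∈ H, #e = r + 1)
    (W : Finset V) : ∑ v, linkDegree H W v ≤ #W ^ r * d := by
  have hlink (v : V) : linkDegree H W v = #{T ∈ powersetCard r W | v ∉ T ∧ insert v T ∈ H} := by
    refine congrArg card (Finset.ext fun T ↦ ?_)
    simp only [mem_filter, mem_powersetCard, mem_memberSubfamily]
    refine ⟨fun h ↦ ⟨⟨h.2, ?_⟩, h.1.2, h.1.1⟩, fun h ↦ ⟨⟨h.2.2, h.2.1⟩, h.1.1⟩⟩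
    exact card_of_mem_memberSubfamily hH (mem_memberSubfamily.2 h.1)
  have hdeg (T) (hT : T ∈ powersetCard r W) : #{v | v ∉ T ∧ insert v T ∈ H} ≤ d := by
    refine (card_le_card_of_injOn (fun v ↦ insert v T) ?_ ?_).trans (hd T (mem_powersetCard.1 hT).2)
    · intro v hv
      exact mem_filter.2 ⟨(mem_filter.1 hv).2.2, subset_insert v T⟩
    · exact fun v hv w _ hvw ↦ (insert_inj (mem_filter.1 hv).2.1).1 hvw
  calc ∑ v, linkDegree H W v
      = ∑ v, #{T ∈ powersetCard r W | v ∉ T ∧ insert v T ∈ H} := sum_congr rfl fun v _ ↦ hlink v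
    _ = ∑ T ∈ powersetCard r W, #{v | v ∉ T ∧ insert v T ∈ H} :=
        sum_card_bipartiteAbove_eq_sum_card_bipartiteBelow fun v T ↦ v ∉ T ∧ insert v T ∈ H
    _ ≤ #(powersetCard r W) * d := sum_le_card_nsmul _ _ _ hdeg
    _ ≤ #W ^ r * d := by
        rw [card_powersetCard]
        gcongr
        exact Nat.choose_le_pow _ _

end Codegree

section Crowding

variable {V : Type*} [DecidableEq V] {H : Finset (Finset V)} {U : Finset V} {v : V} {r : ℕ}

/-- The ordered pairs `(e, g)` of distinct edges of a uniform hypergraph sharing at least two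
vertices, one of the two obstructions to local sparseness. -/
noncomputable def overlappingPairs (H : Finset (Finset V)) : Finset (Finset V × Finset V) :=
  {c ∈ H ×ˢ H | ¬ c.2 ⊆ c.1 ∧ 2 ≤ #(c.1 ∩ c.2)}

/-- The triples `(e, f, g)` of edges, none contained in the union of the preceding ones, such that
`f` meets `e` and `g` has at least two vertices in `e ∪ f`. They are the second obstruction to local
sparseness: a crowded vertex `v ∈ e ∩ f` and an edge `g` joining two of its neighbors. -/
noncomputable def edgeTriangles (H : Finset (Finset V)) :
    Finset (Finset V × Finset V × Finset V) :=
  {c ∈ H ×ˢ H ×ˢ H | (¬ c.2.1 ⊆ c.1 ∧ 1 ≤ #(c.1 ∩ c.2.1)) ∧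
    ¬ c.2.2 ⊆ c.1 ∪ c.2.1 ∧ 2 ≤ #((c.1 ∪ c.2.1) ∩ c.2.2)}

lemma mem_overlappingPairs (hH : ∀ e ∈ H, #e = r) {e g : Finset V} (he : e ∈ H) (hg : g ∈ H)
    (hve : v ∈ e) (hvg : v ∉ g) (h2 : 2 ≤ #(e ∩ g)) : (e, g) ∈ overlappingPairs H := by
  refine mem_filter.2 ⟨mk_mem_product he hg, fun hge : g ⊆ e ↦ hvg ?_, h2⟩
  rwa [eq_of_subset_of_card_le hge ((hH e he).trans (hH g hg).symm).le]

lemma exists_mem_of_not_isUncrowdedAt (hr : 2 ≤ r) (hH : ∀ e ∈ H, #e = r + 1) (hv : v ∈ U)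
    (hbad : ¬ IsUncrowdedAt H U v) :
    (∃ c ∈ overlappingPairs H, c.1 ∪ c.2 ⊆ U ∧ v ∈ c.1) ∨
      ∃ c ∈ edgeTriangles H, c.1 ∪ c.2.1 ∪ c.2.2 ⊆ U ∧ v ∈ c.1 := by
  simp only [IsUncrowdedAt, not_forall, not_le] at hbad
  obtain ⟨g, hg, hgU, hvg, hcard⟩ := hbad
  obtain ⟨a, ha, b, hb, hab⟩ := one_lt_card.1 hcard
  have hedge {x} (hx : x ∈ nbhdIn H U v) : ∃ e ∈ H, e ⊆ U ∧ v ∈ e ∧ x ∈ e := by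
    obtain ⟨T, ⟨hT, -⟩, hTU, hxT⟩ := mem_nbhdIn.1 hx
    exact ⟨_, hT, insert_subset hv hTU, mem_insert_self _ _, mem_insert_of_mem hxT⟩
  obtain ⟨hag, haN⟩ := mem_inter.1 ha
  obtain ⟨hbg, hbN⟩ := mem_inter.1 hb
  obtain ⟨e, he, heU, hve, hae⟩ := hedge haN
  obtain ⟨f, hf, hfU, hvf, hbf⟩ := hedge hbN
  by_cases heg : 2 ≤ #(e ∩ g)
  · exact .inl ⟨_, mem_overlappingPairs hH he hg hve hvg heg, union_subset heU hgU, hve⟩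
  by_cases hfg : 2 ≤ #(f ∩ g)
  · exact .inl ⟨_, mem_overlappingPairs hH hf hg hvf hvg hfg, union_subset hfU hgU, hvf⟩
  refine .inr ⟨(e, f, g), mem_filter.2 ⟨?_, ⟨?_, ?_⟩, ?_, ?_⟩, ?_, hve⟩
  · exact mk_mem_product he (mk_mem_product hf hg)
  · intro hfe
    exact heg (one_lt_card.2 ⟨a, mem_inter.2 ⟨hae, hag⟩, b, mem_inter.2 ⟨hfe hbf, hbg⟩, hab⟩)
  · exact card_pos.2 ⟨v, mem_inter.2 ⟨hve, hvf⟩⟩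
  · intro hgef
    have hsplit := card_union_le (e ∩ g) (f ∩ g)
    rw [← union_inter_distrib_right, inter_eq_right.2 hgef, hH g hg] at hsplit
    lia
  · exact one_lt_card.2 ⟨a, mem_inter.2 ⟨mem_union_left _ hae, hag⟩,
      b, mem_inter.2 ⟨mem_union_right _ hbf, hbg⟩, hab⟩
  · exact union_subset (union_subset heU hfU) hgU

lemma card_filter_not_isUncrowdedAt_le (hr : 2 ≤ r) (hH : ∀ e ∈ H, #e = r + 1) (U : Finset V) :
    #{v ∈ U | ¬ IsUncrowdedAt H U v} ≤
      (r + 1) * (#{c ∈ overlappingPairs H | c.1 ∪ c.2 ⊆ U} +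
        #{c ∈ edgeTriangles H | c.1 ∪ c.2.1 ∪ c.2.2 ⊆ U}) := by
  set P := {c ∈ overlappingPairs H | c.1 ∪ c.2 ⊆ U}
  set T := {c ∈ edgeTriangles H | c.1 ∪ c.2.1 ∪ c.2.2 ⊆ U}
  have hcover : {v ∈ U | ¬ IsUncrowdedAt H U v} ⊆ P.biUnion Prod.fst ∪ T.biUnion Prod.fst := by
    intro v hv
    obtain ⟨hvU, hbad⟩ := mem_filter.1 hv
    rcases exists_mem_of_not_isUncrowdedAt hr hH hvU hbad with ⟨c, hc, hcU, hvc⟩ | ⟨c, hc, hcU, hvc⟩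
    · exact mem_union_left _ (mem_biUnion.2 ⟨c, mem_filter.2 ⟨hc, hcU⟩, hvc⟩)
    · exact mem_union_right _ (mem_biUnion.2 ⟨c, mem_filter.2 ⟨hc, hcU⟩, hvc⟩)
  have hP : #(P.biUnion Prod.fst) ≤ #P * (r + 1) := card_biUnion_le_card_mul _ _ _ fun c hc ↦
    (hH _ (mem_product.1 (mem_filter.1 (mem_filter.1 hc).1).1).1).le
  have hT : #(T.biUnion Prod.fst) ≤ #T * (r + 1) := card_biUnion_le_card_mul _ _ _ fun c hc ↦
    (hH _ (mem_product.1 (mem_filter.1 (mem_filter.1 hc).1).1).1).le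
  have hunion := (card_le_card hcover).trans (card_union_le _ _)
  lia

lemma pow_card_union (p : ℝ) (e g : Finset V) : p ^ #(e ∪ g) = p ^ #e * p ^ #(g \ e) := by
  rw [← pow_add, add_comm, card_sdiff_add_card, union_comm]

end Crowding

section CrowdingProbability

variable {V : Type*} [Fintype V] [DecidableEq V] {H : Finset (Finset V)} {d r : ℕ} {p : ℝ}

lemma maxDegLe.sum_inter_eq_pow_card_sdiff_le (hd : maxDegLe r H d) (hH : ∀ e ∈ H, #e = r + 1)
    (h0 : 0 ≤ p) (e : Finset V) {J : Finset V} (hJ : #J ≤ r) :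
    ∑ g ∈ H with e ∩ g = J, p ^ #(g \ e) ≤ p * d * (p * Fintype.card V) ^ (r - #J) := by
  set F := {g ∈ H | e ∩ g = J}
  have hcount : (#F : ℝ) ≤ (Fintype.card V : ℝ) ^ (r - #J) * d := by
    have hFJ : F ⊆ {g ∈ H | J ⊆ g} :=
      monotone_filter_right H fun g _ hg ↦ hg ▸ inter_subset_right
    exact_mod_cast (card_le_card hFJ).trans (hd.card_filter_subset_le hH hJ)
  have hweight (g) (hg : g ∈ F) : p ^ #(g \ e) = p * p ^ (r - #J) := by
    obtain ⟨hgH, hgJ⟩ := mem_filter.1 hg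
    rw [card_sdiff, hgJ, hH g hgH, ← pow_succ', Nat.sub_add_comm hJ]
  calc ∑ g ∈ F, p ^ #(g \ e) = #F * (p * p ^ (r - #J)) := by
        rw [sum_congr rfl hweight, sum_const, nsmul_eq_mul]
    _ ≤ (Fintype.card V : ℝ) ^ (r - #J) * d * (p * p ^ (r - #J)) := by gcongr
    _ = p * d * (p * Fintype.card V) ^ (r - #J) := by
        rw [mul_pow]
        ring

lemma maxDegLe.sum_pow_card_sdiff_le (hd : maxDegLe r H d) (hH : ∀ e ∈ H, #e = r + 1)
    (h0 : 0 ≤ p) (hpn : 1 ≤ p * Fintype.card V) (e : Finset V) (j : ℕ) :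
    ∑ g ∈ H with ¬ g ⊆ e ∧ j ≤ #(e ∩ g), p ^ #(g \ e) ≤
      2 ^ #e * (p * d * (p * Fintype.card V) ^ (r - j)) := by
  have hfiber (J) (_ : J ∈ e.powerset) :
      ∑ g ∈ H with (¬ g ⊆ e ∧ j ≤ #(e ∩ g)) ∧ e ∩ g = J, p ^ #(g \ e) ≤
        p * d * (p * Fintype.card V) ^ (r - j) := by
    rcases {g ∈ H | (¬ g ⊆ e ∧ j ≤ #(e ∩ g)) ∧ e ∩ g = J}.eq_empty_or_nonempty with hF | ⟨g, hg⟩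
    · rw [hF, sum_empty]
      positivity
    obtain ⟨hgH, ⟨hge, hj⟩, rfl⟩ := mem_filter.1 hg
    have hJ : #(e ∩ g) < #g := card_lt_card
      ⟨inter_subset_right, fun h ↦ hge (h.trans inter_subset_left)⟩
    rw [hH g hgH, Nat.lt_succ_iff] at hJ
    calc _ ≤ ∑ g' ∈ H with e ∩ g' = e ∩ g, p ^ #(g' \ e) :=
          sum_le_sum_of_subset_of_nonneg (monotone_filter_right H fun _ _ h ↦ h.2)
            fun _ _ _ ↦ by positivity
      _ ≤ p * d * (p * Fintype.card V) ^ (r - #(e ∩ g)) :=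
          hd.sum_inter_eq_pow_card_sdiff_le hH h0 e hJ
      _ ≤ p * d * (p * Fintype.card V) ^ (r - j) := by gcongr
  calc ∑ g ∈ H with ¬ g ⊆ e ∧ j ≤ #(e ∩ g), p ^ #(g \ e)
      = ∑ J ∈ e.powerset, ∑ g ∈ H with (¬ g ⊆ e ∧ j ≤ #(e ∩ g)) ∧ e ∩ g = J, p ^ #(g \ e) := by
        simp only [← filter_filter]
        exact (sum_fiberwise_of_maps_to (fun g _ ↦ mem_powerset.2 inter_subset_left) _).symm
    _ ≤ 2 ^ #e * (p * d * (p * Fintype.card V) ^ (r - j)) := by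
        refine (sum_le_card_nsmul _ _ _ hfiber).trans_eq ?_
        rw [card_powerset, nsmul_eq_mul, Nat.cast_pow, Nat.cast_ofNat]

lemma maxDegLe.sum_pow_card_le (hd : maxDegLe r H d) (hH : ∀ e ∈ H, #e = r + 1) (h0 : 0 ≤ p) :
    ∑ e ∈ H, p ^ #e ≤ p * d * (p * Fintype.card V) ^ r := by
  simpa using hd.sum_inter_eq_pow_card_sdiff_le hH h0 ∅ (J := ∅) (by simp)

lemma maxDegLe.sum_overlappingPairs_le (hd : maxDegLe r H d) (hH : ∀ e ∈ H, #e = r + 1)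
    (h0 : 0 ≤ p) (hpn : 1 ≤ p * Fintype.card V) :
    ∑ c ∈ overlappingPairs H, p ^ #(c.1 ∪ c.2) ≤
      2 ^ (r + 1) * (p * d) ^ 2 * (p * Fintype.card V) ^ (r + (r - 2)) := by
  set M := p * Fintype.card V
  calc ∑ c ∈ overlappingPairs H, p ^ #(c.1 ∪ c.2)
      = ∑ e ∈ H, p ^ #e * ∑ g ∈ H with ¬ g ⊆ e ∧ 2 ≤ #(e ∩ g), p ^ #(g \ e) := by
        simp only [overlappingPairs, sum_filter, sum_product, mul_sum, mul_ite, mul_zero,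
          pow_card_union]
    _ ≤ ∑ e ∈ H, p ^ #e * (2 ^ (r + 1) * (p * d * M ^ (r - 2))) := by
        gcongr with e he
        exact (hd.sum_pow_card_sdiff_le hH h0 hpn e 2).trans_eq (by rw [hH e he])
    _ ≤ p * d * M ^ r * (2 ^ (r + 1) * (p * d * M ^ (r - 2))) := by
        rw [← sum_mul]
        gcongr
        exact hd.sum_pow_card_le hH h0
    _ = _ := by
        rw [pow_add M]
        ring

lemma maxDegLe.sum_edgeTriangles_le (hd : maxDegLe r H d) (hH : ∀ e ∈ H, #e = r + 1)
    (h0 : 0 ≤ p) (hpn : 1 ≤ p * Fintype.card V) :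
    ∑ c ∈ edgeTriangles H, p ^ #(c.1 ∪ c.2.1 ∪ c.2.2) ≤
      8 ^ (r + 1) * (p * d) ^ 3 * (p * Fintype.card V) ^ (r + (r - 1) + (r - 2)) := by
  set M := p * Fintype.card V
  calc ∑ c ∈ edgeTriangles H, p ^ #(c.1 ∪ c.2.1 ∪ c.2.2)
      = ∑ e ∈ H, p ^ #e * ∑ f ∈ H with ¬ f ⊆ e ∧ 1 ≤ #(e ∩ f), p ^ #(f \ e) *
          ∑ g ∈ H with ¬ g ⊆ e ∪ f ∧ 2 ≤ #((e ∪ f) ∩ g), p ^ #(g \ (e ∪ f)) := by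
        simp only [edgeTriangles, sum_filter, sum_product, mul_sum, mul_ite, mul_zero,
          pow_card_union, ite_and]
        refine sum_congr rfl fun e _ ↦ sum_congr rfl fun f _ ↦ ?_
        split_ifs <;> simp only [mul_assoc, sum_const_zero]
    _ ≤ ∑ e ∈ H, p ^ #e * ∑ f ∈ H with ¬ f ⊆ e ∧ 1 ≤ #(e ∩ f), p ^ #(f \ e) *
          (4 ^ (r + 1) * (p * d * M ^ (r - 2))) := by
        gcongr with e he f hf
        have hef : #(e ∪ f) ≤ 2 * (r + 1) := by
          have := card_union_le e f
          rw [hH e he, hH f (mem_filter.1 hf).1] at this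
          lia
        calc _ ≤ 2 ^ #(e ∪ f) * (p * d * M ^ (r - 2)) := hd.sum_pow_card_sdiff_le hH h0 hpn _ 2
          _ ≤ 2 ^ (2 * (r + 1)) * (p * d * M ^ (r - 2)) := by
            gcongr
            norm_num
          _ = _ := by
            rw [pow_mul]
            norm_num
    _ ≤ ∑ e ∈ H, p ^ #e * (2 ^ (r + 1) * (p * d * M ^ (r - 1)) *
          (4 ^ (r + 1) * (p * d * M ^ (r - 2)))) := by
        gcongr with e he
        rw [← sum_mul]
        gcongr
        exact (hd.sum_pow_card_sdiff_le hH h0 hpn e 1).trans_eq (by rw [hH e he])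
    _ ≤ p * d * M ^ r * (2 ^ (r + 1) * (p * d * M ^ (r - 1)) *
          (4 ^ (r + 1) * (p * d * M ^ (r - 2)))) := by
        rw [← sum_mul]
        gcongr
        exact hd.sum_pow_card_le hH h0
    _ = _ := by
        have hpow : (8 : ℝ) ^ (r + 1) = 2 ^ (r + 1) * 4 ^ (r + 1) := by
          rw [← mul_pow]
          norm_num
        rw [hpow, pow_add M, pow_add M]
        ring

end CrowdingProbability

section Sampling

variable {V : Type*} [Fintype V] [DecidableEq V] {H : Finset (Finset V)} {d r ℓ : ℕ} {p K : ℝ}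

lemma maxDegLe.binomialExp_card_not_isUncrowdedAt_le (hr : 2 ≤ r) (hd : maxDegLe r H d)
    (hH : ∀ e ∈ H, #e = r + 1) (h0 : 0 ≤ p) (h1 : p ≤ 1) (hpn : 1 ≤ p * Fintype.card V)
    (hdn : d ≤ p * Fintype.card V) :
    binomialExp p (fun U ↦ (#{v ∈ U | ¬ IsUncrowdedAt H U v} : ℝ)) ≤
      (r + 1) * (2 ^ (r + 1) * (p * (p * Fintype.card V) ^ r) ^ 2 +
        8 ^ (r + 1) * (p * (p * Fintype.card V) ^ r) ^ 3) := by
  obtain ⟨s, rfl⟩ := Nat.exists_eq_add_of_le' hr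
  have hpairs := hd.sum_overlappingPairs_le hH h0 hpn
  have htriangles := hd.sum_edgeTriangles_le hH h0 hpn
  set M := p * Fintype.card V
  calc binomialExp p (fun U ↦ (#{v ∈ U | ¬ IsUncrowdedAt H U v} : ℝ))
      ≤ binomialExp p (((s + 2 : ℕ) + 1 : ℝ) •
          ((fun U ↦ (#{c ∈ overlappingPairs H | c.1 ∪ c.2 ⊆ U} : ℝ)) +
            fun U ↦ (#{c ∈ edgeTriangles H | c.1 ∪ c.2.1 ∪ c.2.2 ⊆ U} : ℝ))) := by
        refine binomialExp_mono h0 h1 fun U ↦ ?_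
        simp only [Pi.smul_apply, Pi.add_apply, smul_eq_mul]
        exact_mod_cast card_filter_not_isUncrowdedAt_le hr hH U
    _ = ((s + 2 : ℕ) + 1) * (∑ c ∈ overlappingPairs H, p ^ #(c.1 ∪ c.2) +
          ∑ c ∈ edgeTriangles H, p ^ #(c.1 ∪ c.2.1 ∪ c.2.2)) := by
        rw [map_smul, map_add, smul_eq_mul, binomialExp_card_filter_subset,
          binomialExp_card_filter_subset]
    _ ≤ ((s + 2 : ℕ) + 1) * (2 ^ (s + 2 + 1) * (p * M) ^ 2 * M ^ (s + 2 + s) +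
          8 ^ (s + 2 + 1) * (p * M) ^ 3 * M ^ (s + 2 + (s + 1) + s)) := by
        gcongr
        · exact hpairs.trans (by gcongr; lia)
        · exact htriangles.trans (by gcongr <;> lia)
    _ = _ := by ring

lemma HasIndepNbhds.isUncrowdedAt_of_card_eq_two (hN : HasIndepNbhds 2 H) (hH : ∀ e ∈ H, #e = 2)
    (U : Finset V) (v : V) : IsUncrowdedAt H U v := by
  intro g hg _ _
  by_contra! hcard
  have hgN : g ⊆ nbhdIn H U v := by
    rw [← inter_eq_left]
    exact eq_of_subset_of_card_le inter_subset_left (by have := hH g hg; lia)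
  refine hN {v} (card_singleton v) g hg fun x hx ↦ mem_filter.2 ⟨mem_univ x, ?_⟩
  obtain ⟨T, hT, -, hxT⟩ := mem_nbhdIn.1 (hgN hx)
  obtain ⟨y, rfl⟩ := card_eq_one.1 (card_of_mem_memberSubfamily hH (mem_memberSubfamily.2 hT))
  rw [mem_singleton.1 hxT, pair_comm]
  exact hT.1

lemma HasIndepNbhds.binomialExp_card_not_isUncrowdedAt_le (hr : 1 ≤ r)
    (hN : HasIndepNbhds (r + 1) H) (hH : ∀ e ∈ H, #e = r + 1) (h0 : 0 ≤ p) (h1 : p ≤ 1)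
    (hpn : 1 ≤ p * Fintype.card V) (hα : indepNum H ≤ p * Fintype.card V) :
    binomialExp p (fun U ↦ (#{v ∈ U | ¬ IsUncrowdedAt H U v} : ℝ)) ≤
      (r + 1) * (2 ^ (r + 1) * (p * (p * Fintype.card V) ^ r) ^ 2 +
        8 ^ (r + 1) * (p * (p * Fintype.card V) ^ r) ^ 3) := by
  rcases hr.eq_or_lt' with rfl | hr
  · simp only [hN.isUncrowdedAt_of_card_eq_two hH, not_true, filter_false, card_empty,
      binomialExp_const, Nat.cast_zero]
    positivity
  · exact (hN.maxDegLe_indepNum hH).binomialExp_card_not_isUncrowdedAt_le hr hH h0 h1 hpn hα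

lemma maxDegLe.binomialExp_ite_lt_sum_min_le (hd : maxDegLe r H d) (hH : ∀ e ∈ H, #e = r + 1)
    (h0 : 0 ≤ p) (h1 : p ≤ 1) (hℓ : 0 < ℓ) (hK : p * d ^ (r + 1) ≤ K * ℓ) {W : Finset V}
    (hW : #W ≤ d) :
    binomialExp p (fun U ↦ if 3 * K * ℓ < ∑ v ∈ U, min ℓ (linkDegree H W v) then 1 else 0) ≤
      Real.exp (-K) := by
  have hℓ' : (0 : ℝ) < ℓ := Nat.cast_pos.2 hℓ
  have hmean : p * ∑ v, (min ℓ (linkDegree H W v) / ℓ : ℝ) ≤ K := by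
    have hdeg : ∑ v, min ℓ (linkDegree H W v) ≤ d ^ (r + 1) :=
      calc _ ≤ ∑ v, linkDegree H W v := sum_le_sum fun v _ ↦ min_le_right _ _
        _ ≤ #W ^ r * d := hd.sum_linkDegree_le hH W
        _ ≤ d ^ (r + 1) := by rw [pow_succ]; gcongr
    rw [← sum_div, ← mul_div_assoc, div_le_iff₀ hℓ']
    refine le_trans ?_ hK
    gcongr
    exact_mod_cast hdeg
  have htail := binomialExp_ite_lt_sum_le h0 h1 (f := fun v ↦ (min ℓ (linkDegree H W v) / ℓ : ℝ))
    (fun v ↦ by positivity) (fun v ↦ (div_le_one hℓ').2 (Nat.cast_le.2 (min_le_left _ _))) hmean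
  simp_rw [← sum_div, lt_div_iff₀ hℓ'] at htail
  exact_mod_cast htail

end Sampling

section Assembly

variable {V : Type*} [Fintype V] [DecidableEq V] [Nonempty V] {H : Finset (Finset V)}
  {d r ℓ : ℕ} {p K : ℝ}

lemma maxDegLe.exists_card_filter_isUncrowdedAt_ge (hd : maxDegLe r H d)
    (hH : ∀ e ∈ H, #e = r + 1) (h0 : 0 < p) (h1 : p ≤ 1) (hℓ : 0 < ℓ) (hdn : d ≤ Fintype.card V)
    (hbad : binomialExp p (fun U ↦ (#{v ∈ U | ¬ IsUncrowdedAt H U v} : ℝ)) ≤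
      p * Fintype.card V / 4)
    (hK : p * d ^ (r + 1) ≤ K * ℓ)
    (htail : Fintype.card V ^ (d + 1) * Real.exp (-K) ≤ p * Fintype.card V / 4) :
    ∃ U, p * Fintype.card V / 2 ≤ #{v ∈ U | IsUncrowdedAt H U v} ∧
      ∀ W, #W ≤ d → ∑ v ∈ U, min ℓ (linkDegree H W v) ≤ 3 * K * ℓ := by
  have hunion : (Fintype.card V : ℝ) * ∑ W ∈ powersetCard d univ, binomialExp p
      (fun U ↦ if 3 * K * ℓ < ∑ v ∈ U, min ℓ (linkDegree H W v) then 1 else 0) ≤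
        p * Fintype.card V / 4 := by
    rw [pow_succ', mul_assoc (Fintype.card V : ℝ)] at htail
    refine (mul_le_mul_of_nonneg_left ?_ (Nat.cast_nonneg _)).trans htail
    calc ∑ W ∈ powersetCard d univ, binomialExp p
          (fun U ↦ if 3 * K * ℓ < ∑ v ∈ U, min ℓ (linkDegree H W v) then 1 else 0)
        ≤ #(powersetCard d (univ : Finset V)) • Real.exp (-K) := by
          exact sum_le_card_nsmul _ _ _ fun W hW ↦
            hd.binomialExp_ite_lt_sum_min_le hH h0.le h1 hℓ hK (mem_powersetCard.1 hW).2.le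
      _ ≤ Fintype.card V ^ d * Real.exp (-K) := by
          rw [nsmul_eq_mul, card_powersetCard, card_univ]
          gcongr
          exact_mod_cast Nat.choose_le_pow _ _
  obtain ⟨U, hU, hsum⟩ := exists_card_filter_not_ge_and_forall_not h0 h1 _ _ _ hbad hunion
  simp only [not_not] at hU
  refine ⟨U, hU, fun W hW ↦ ?_⟩
  obtain ⟨T, hWT, hT⟩ := exists_superset_card_eq hW hdn
  refine le_trans ?_ (not_lt.1 (hsum T (mem_powersetCard.2 ⟨subset_univ T, hT⟩)))
  gcongr with v
  exact linkDegree_mono hWT v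

lemma maxDegLe.mul_le_two_pow_mul (hr : 1 ≤ r) (hd : maxDegLe r H (indepNum H))
    (hH : ∀ e ∈ H, #e = r + 1) (h0 : 0 < p) (h1 : p ≤ 1) (hℓ : 0 < ℓ)
    (hbad : binomialExp p (fun U ↦ (#{v ∈ U | ¬ IsUncrowdedAt H U v} : ℝ)) ≤
      p * Fintype.card V / 4)
    (hK : p * indepNum H ^ (r + 1) ≤ K * ℓ)
    (htail : Fintype.card V ^ (indepNum H + 1) * Real.exp (-K) ≤ p * Fintype.card V / 4) :
    ℓ * (p * Fintype.card V / 2) ≤ 2 ^ (r + 1) * (4 ^ ℓ * indepNum H + 3 * K * ℓ) := by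
  obtain ⟨U, hU, hsum⟩ := hd.exists_card_filter_isUncrowdedAt_ge hH h0 h1 hℓ (indepNum_le_card H)
    hbad hK htail
  have hcard (W) (hW : W ∈ indepSets H U) : #W ≤ indepNum H :=
    (mem_indepSets.1 hW).2.card_le_indepNum
  have hlocal := mul_card_filter_isUncrowdedAt_le hr hH hcard
    fun W hW ↦ Nat.le_floor (hsum W (hcard W hW))
  have hKℓ : 0 ≤ 3 * K * ℓ := by
    have : 0 ≤ p * indepNum H ^ (r + 1) := by positivity
    linarith
  calc ℓ * (p * Fintype.card V / 2) ≤ ℓ * #{v ∈ U | IsUncrowdedAt H U v} := by gcongr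
    _ ≤ 2 ^ (r + 1) * (4 ^ ℓ * indepNum H + ⌊3 * K * ℓ⌋₊) := mod_cast hlocal
    _ ≤ 2 ^ (r + 1) * (4 ^ ℓ * indepNum H + 3 * K * ℓ) := by
        gcongr
        exact Nat.floor_le hKℓ

end Assembly

section Parameters

lemma pow_succ_mul_exp_neg_le_one {y x K : ℝ} (hy : 0 < y) (hlog : 2 * Real.log y ≤ x) {a : ℕ}
    (ha : 1 ≤ a) (hK : x * a ≤ K) (hx : 0 ≤ x) : y ^ (a + 1) * Real.exp (-K) ≤ 1 := by
  have ha' : (1 : ℝ) ≤ a := mod_cast ha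
  rw [← Real.exp_log (pow_pos hy _), Real.log_pow, ← Real.exp_add, Real.exp_le_one_iff]
  push_cast
  nlinarith

lemma exists_mul_eq_pow {k : ℕ} (hk : 2 ≤ k) {x : ℝ} (hx : 1 ≤ x) :
    ∃ p, 0 < p ∧ p ≤ 1 ∧ p * x ^ (6 * k ^ 2) = x ^ (6 * k + 2) := by
  have := one_pos.trans_le hx
  refine ⟨x ^ (6 * k + 2) / x ^ (6 * k ^ 2), by positivity, ?_, div_mul_cancel₀ _ (by positivity)⟩
  rw [div_le_one (by positivity)]
  exact pow_le_pow_right₀ hx (by nlinarith)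

lemma mul_le_pow_div_of_pow_le {k : ℕ} (hk : k ≠ 0) {x A a : ℝ} (hA : 0 < A) (hAx : A ≤ x)
    (ha : a ^ k ≤ x ^ (6 * k ^ 2) * (x / A)) : x * a ≤ x ^ (6 * k + 2) / A := by
  have hx : 0 < x := hA.trans_le hAx
  have hroot : a ≤ x ^ (6 * k + 1) / A := by
    refine le_of_pow_le_pow_left₀ hk (by positivity) ?_
    calc a ^ k ≤ x ^ (6 * k ^ 2) * (x / A) := ha
      _ ≤ x ^ (6 * k ^ 2) * (x / A) ^ k := by
          gcongr
          exact le_self_pow₀ ((one_le_div hA).2 hAx) hk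
      _ = (x ^ (6 * k + 1) / A) ^ k := by
          rw [div_pow, div_pow, ← pow_mul, ← mul_div_assoc, ← pow_add]
          ring_nf
  calc x * a ≤ x * (x ^ (6 * k + 1) / A) := by gcongr
    _ = x ^ (6 * k + 2) / A := by ring

lemma two_pow_le_mul_eight_pow {k : ℕ} (hk : 2 ≤ k) : (2 : ℝ) ^ (k + 4) ≤ k * 8 ^ (k + 1) := by
  have hk' : (2 : ℝ) ≤ k := mod_cast hk
  calc (2 : ℝ) ^ (k + 4) = 2 * (8 * 2 ^ k) := by ring
    _ ≤ k * (8 * 8 ^ k) := by gcongr; norm_num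
    _ = k * 8 ^ (k + 1) := by ring

variable {V : Type*} [Fintype V] [DecidableEq V] {H : Finset (Finset V)} {r ℓ : ℕ} {x : ℝ}

lemma HasIndepNbhds.binomialExp_card_not_isUncrowdedAt_le_div_four (hr : 1 ≤ r)
    (hN : HasIndepNbhds (r + 1) H) (hH : ∀ e ∈ H, #e = r + 1) {p : ℝ} (h0 : 0 ≤ p) (h1 : p ≤ 1)
    (hn : Fintype.card V = x ^ (6 * (r + 1) ^ 2)) (hx : (r + 1) * 8 ^ (r + 2) ≤ x)
    (hpn : p * Fintype.card V = x ^ (6 * (r + 1) + 2)) (hα : x * indepNum H ≤ p * Fintype.card V) :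
    binomialExp p (fun U ↦ (#{v ∈ U | ¬ IsUncrowdedAt H U v} : ℝ)) ≤ p * Fintype.card V / 4 := by
  have hx1 : 1 ≤ x := by
    refine le_trans ?_ hx
    exact one_le_mul_of_one_le_of_one_le (by simp) (one_le_pow₀ (by norm_num))
  have hp : p * (x ^ (6 * (r + 1) + 2)) ^ r = x ^ (2 * (r + 1)) := by
    refine mul_right_cancel₀ (pow_ne_zero (6 * (r + 1) ^ 2) (by positivity : x ≠ 0)) ?_
    rw [mul_right_comm, ← hn, hpn, hn]
    ring
  have hbad := hN.binomialExp_card_not_isUncrowdedAt_le hr hH h0 h1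
    (by rw [hpn]; exact one_le_pow₀ hx1)
    ((le_mul_of_one_le_left (Nat.cast_nonneg _) hx1).trans hα)
  rw [hpn, hp] at hbad
  rw [hpn]
  set q := x ^ (2 * (r + 1))
  have hq : 1 ≤ q := one_le_pow₀ hx1
  calc _ ≤ (r + 1) * (2 ^ (r + 1) * q ^ 2 + 8 ^ (r + 1) * q ^ 3) := hbad
    _ ≤ (r + 1) * (8 ^ (r + 1) * q ^ 3 + 8 ^ (r + 1) * q ^ 3) := by gcongr <;> norm_num
    _ = (r + 1) * 8 ^ (r + 2) * q ^ 3 / 4 := by ring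
    _ ≤ x ^ 2 * q ^ 3 / 4 := by
        gcongr
        exact hx.trans (le_self_pow₀ hx1 two_ne_zero)
    _ = x ^ (6 * (r + 1) + 2) / 4 := by ring

lemma HasIndepNbhds.card_mul_lt_indepNum_pow [Nonempty V] (hr : 1 ≤ r)
    (hN : HasIndepNbhds (r + 1) H) (hH : ∀ e ∈ H, #e = r + 1)
    (hn : Fintype.card V = x ^ (6 * (r + 1) ^ 2)) (hx : (r + 1) * 8 ^ (r + 2) ≤ x)
    (hlog : 2 * Real.log (Fintype.card V) ≤ x) (hℓ : 0 < ℓ) (h4 : 4 ^ ℓ ≤ x) :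
    Fintype.card V * (ℓ / 2 ^ (r + 5)) < (indepNum H : ℝ) ^ (r + 1) := by
  by_contra! hα
  set A : ℝ := 2 ^ (r + 5) with hA
  have hA1 : 1 ≤ A := one_le_pow₀ one_le_two
  have hAx : A ≤ x := (two_pow_le_mul_eight_pow (Nat.succ_le_succ hr)).trans (mod_cast hx)
  have hx4 : 4 ≤ x := (le_self_pow₀ (by norm_num) hℓ.ne').trans h4
  have hℓx : (ℓ : ℝ) ≤ x := le_trans (mod_cast (Nat.lt_pow_self (by norm_num)).le) h4
  obtain ⟨p, hp0, hp1, hpn⟩ := exists_mul_eq_pow (Nat.succ_le_succ hr) (by linarith : 1 ≤ x)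
  rw [← hn] at hpn
  have hM : 4 ≤ p * Fintype.card V := by
    rw [hpn]
    exact hx4.trans (le_self_pow₀ (by linarith) (by lia))
  have hαx : x * indepNum H ≤ p * Fintype.card V / A := by
    rw [hpn]
    refine mul_le_pow_div_of_pow_le r.succ_ne_zero (by positivity) hAx (hα.trans ?_)
    rw [hn]
    gcongr
  have hbad := hN.binomialExp_card_not_isUncrowdedAt_le_div_four hr hH hp0.le hp1 hn hx hpn
    (hαx.trans (div_le_self (by linarith) hA1))
  have hK : p * indepNum H ^ (r + 1) ≤ p * Fintype.card V / A * ℓ :=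
    calc p * indepNum H ^ (r + 1) ≤ p * (Fintype.card V * (ℓ / A)) := by gcongr
      _ = p * Fintype.card V / A * ℓ := by ring
  have htail := pow_succ_mul_exp_neg_le_one (Nat.cast_pos.2 Fintype.card_pos) hlog
    (one_le_indepNum fun e he ↦ by have := hH e he; lia) hαx (by linarith)
  have hoccupied : 4 ^ ℓ * indepNum H ≤ p * Fintype.card V / A * ℓ :=
    calc 4 ^ ℓ * (indepNum H : ℝ) ≤ x * indepNum H := by gcongr
      _ ≤ p * Fintype.card V / A := hαx
      _ ≤ p * Fintype.card V / A * ℓ :=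
        le_mul_of_one_le_right (by positivity) (Nat.one_le_cast.2 hℓ)
  have hle : ℓ * (p * Fintype.card V / 2) ≤ ℓ * (p * Fintype.card V / 4) :=
    calc ℓ * (p * Fintype.card V / 2)
        ≤ 2 ^ (r + 1) * (4 ^ ℓ * indepNum H + 3 * (p * Fintype.card V / A) * ℓ) :=
          (hN.maxDegLe_indepNum hH).mul_le_two_pow_mul hr hH hp0 hp1 hℓ hbad hK
            (htail.trans (by linarith))
      _ ≤ 2 ^ (r + 1) * (4 * (p * Fintype.card V / A * ℓ)) := by gcongr; linarith
      _ = ℓ * (p * Fintype.card V / 4) := by rw [hA]; field_simp; ring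
  linarith [le_of_mul_le_mul_left hle (Nat.cast_pos.2 hℓ)]

lemma HasIndepNbhds.mul_log_le_indepNum_pow [Nonempty V] (hr : 1 ≤ r)
    (hN : HasIndepNbhds (r + 1) H) (hH : ∀ e ∈ H, #e = r + 1)
    (hn : Fintype.card V = x ^ (6 * (r + 1) ^ 2)) (hx : (r + 1) * 8 ^ (r + 2) ≤ x)
    (hlog : 2 * Real.log (Fintype.card V) ≤ x) :
    1 / (18 * (r + 1) ^ 2 * 2 ^ (r + 5)) * (Fintype.card V * Real.log (Fintype.card V)) ≤
      (indepNum H : ℝ) ^ (r + 1) := by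
  have hx4 : 4 ≤ x :=
    calc (4 : ℝ) = 2 ^ 2 := by norm_num
      _ ≤ 2 ^ (r + 5) := pow_le_pow_right₀ one_le_two (by lia)
      _ ≤ x := (two_pow_le_mul_eight_pow (Nat.succ_le_succ hr)).trans (mod_cast hx)
  obtain ⟨ℓ, h4, h4'⟩ := exists_nat_pow_near (by linarith : 1 ≤ x) (by norm_num : (1 : ℝ) < 4)
  have hℓ : 0 < ℓ := by
    by_contra! h0
    rw [Nat.le_zero.1 h0, zero_add, pow_one] at h4'
    linarith
  have hlog_le : Real.log (Fintype.card V) ≤ 18 * (r + 1) ^ 2 * ℓ := by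
    have hℓ' : (1 : ℝ) ≤ ℓ := mod_cast hℓ
    have hlog4 : Real.log 4 ≤ 3 / 2 := by
      rw [show (4 : ℝ) = 2 ^ 2 by norm_num, Real.log_pow]
      linarith [Real.log_two_lt_d9]
    have hlogx : Real.log x ≤ (ℓ + 1 : ℕ) * Real.log 4 := by
      rw [← Real.log_pow]
      exact Real.log_le_log (by linarith) h4'.le
    rw [hn, Real.log_pow]
    push_cast at hlogx ⊢
    calc (6 * (r + 1) ^ 2 * Real.log x : ℝ) ≤ 6 * (r + 1) ^ 2 * (3 * ℓ) := by gcongr; nlinarith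
      _ = 18 * (r + 1) ^ 2 * ℓ := by ring
  calc _ ≤ 1 / (18 * (r + 1) ^ 2 * 2 ^ (r + 5)) *
        (Fintype.card V * (18 * (r + 1) ^ 2 * (ℓ : ℝ))) := by gcongr
    _ = Fintype.card V * (ℓ / 2 ^ (r + 5)) := by field_simp
    _ ≤ (indepNum H : ℝ) ^ (r + 1) := (hN.card_mul_lt_indepNum_pow hr hH hn hx hlog hℓ h4).le

end Parameters

lemma eventually_le_rpow_and_log_le_rpow {s : ℝ} (hs : 0 < s) (C : ℝ) :
    ∀ᶠ n : ℕ in Filter.atTop, C ≤ (n : ℝ) ^ s ∧ 2 * Real.log n ≤ (n : ℝ) ^ s := by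
  have hlog := (isLittleO_log_rpow_atTop hs).bound (half_pos one_pos)
  filter_upwards [tendsto_natCast_atTop_atTop.eventually hlog,
    tendsto_natCast_atTop_atTop.eventually ((tendsto_rpow_atTop hs).eventually_ge_atTop C)]
    with n hn hC
  rw [Real.norm_of_nonneg (Real.log_natCast_nonneg n), Real.norm_of_nonneg (by positivity)] at hn
  exact ⟨hC, by linarith⟩

lemma exists_mul_log_le_indepNum_pow {r : ℕ} (hr : 1 ≤ r) :
    ∃ c : ℝ, 0 < c ∧ ∀ (V : Type*) [Fintype V] [DecidableEq V] [Nonempty V]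
      (H : Finset (Finset V)), (∀ e ∈ H, #e = r + 1) → HasIndepNbhds (r + 1) H →
        c * (Fintype.card V * Real.log (Fintype.card V)) ≤ (indepNum H : ℝ) ^ (r + 1) := by
  obtain ⟨n₀, hn₀⟩ := Filter.eventually_atTop.1 (eventually_le_rpow_and_log_le_rpow
    (s := ((6 * (r + 1) ^ 2 : ℕ) : ℝ)⁻¹) (by positivity) ((r + 1) * 8 ^ (r + 2)))
  refine ⟨min (1 / (18 * (r + 1) ^ 2 * 2 ^ (r + 5))) (1 / (n₀ ^ 2 + 1)), by positivity,
    fun V _ _ _ H hH hN ↦ ?_⟩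
  have := Real.log_natCast_nonneg (Fintype.card V)
  rcases lt_or_ge (Fintype.card V) n₀ with hlt | hge
  · have hα : (1 : ℝ) ≤ indepNum H :=
      mod_cast one_le_indepNum fun e he ↦ by have := hH e he; lia
    have hsmall : Fintype.card V * Real.log (Fintype.card V) ≤ (n₀ ^ 2 + 1 : ℝ) :=
      calc Fintype.card V * Real.log (Fintype.card V) ≤ (Fintype.card V * Fintype.card V : ℝ) := by
            gcongr
            exact Real.log_le_self (Nat.cast_nonneg _)
        _ ≤ n₀ * n₀ := by gcongr
        _ ≤ n₀ ^ 2 + 1 := by linarith [sq (n₀ : ℝ)]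
    calc _ ≤ 1 / (n₀ ^ 2 + 1 : ℝ) * (n₀ ^ 2 + 1) := by
          gcongr
          exact min_le_right _ _
      _ = 1 := one_div_mul_cancel (by positivity)
      _ ≤ (indepNum H : ℝ) ^ (r + 1) := one_le_pow₀ hα
  · obtain ⟨hx, hlog⟩ := hn₀ _ hge
    have hn := (Real.rpow_inv_natCast_pow (Nat.cast_nonneg (Fintype.card V))
      (n := 6 * (r + 1) ^ 2) (by positivity)).symm
    refine le_trans ?_ (hN.mul_log_le_indepNum_pow hr hH hn hx hlog)
    gcongr
    exact min_le_left _ _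

/-- For every `r ≥ 2` there is `c > 0` such that every `r`-graph on `n ≥ 2`
vertices with independent neighborhoods has `α(H) ≥ c·(n·log n)^(1/r)`. -/
theorem stmt7 (r : ℕ) (hr : 2 ≤ r) :
    ∃ c : ℝ, 0 < c ∧
      ∀ (V : Type) [Fintype V] [DecidableEq V], ∀ (H : Finset (Finset V)),
        2 ≤ Fintype.card V →
        (∀ e ∈ H, e.card = r) →
        HasIndepNbhds r H →
        c * ((Fintype.card V : ℝ) * Real.log (Fintype.card V)) ^ ((1 : ℝ) / r)
          ≤ (indepNum H : ℝ) := by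
  obtain ⟨s, rfl⟩ := Nat.exists_eq_add_of_le' (one_le_two.trans hr)
  obtain ⟨c, hc, hpow⟩ := exists_mul_log_le_indepNum_pow (Nat.le_of_succ_le_succ hr)
  refine ⟨c ^ ((1 : ℝ) / (s + 1 : ℕ)), by positivity, fun V _ _ H hV hH hN ↦ ?_⟩
  have : Nonempty V := Fintype.card_pos_iff.1 (two_pos.trans_le hV)
  have := Real.log_natCast_nonneg (Fintype.card V)
  calc _ = (c * (Fintype.card V * Real.log (Fintype.card V))) ^ ((1 : ℝ) / (s + 1 : ℕ)) :=
        (Real.mul_rpow hc.le (by positivity)).symm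
    _ ≤ ((indepNum H : ℝ) ^ (s + 1)) ^ ((1 : ℝ) / (s + 1 : ℕ)) := by
        gcongr
        exact hpow V H hH hN
    _ = indepNum H := by
        rw [one_div, Real.pow_rpow_inv_natCast (Nat.cast_nonneg _) s.succ_ne_zero]
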